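/- arXiv:2602.23218 — 3 statements merged into one kernel-verified Lean document; each statement's English description precedes it below -/
import Mathlib

section
/- (Observation 5.13: uniformity of the local operator j_f.) There exists a natural number realizing, simultaneously for all partial functions f : ℕ →. ℕ and all p, q : Set ℕ, the realizability implication (p → q) → (m_f(p) → m_f(q)); and there exists a natural number belonging to ⋂_{f : ℕ →. ℕ} ⟦is-lop[j_f]⟧, i.e. witnessing uniformly in f that j_f is a local operator in the effective topos. -/
/-- Kleene application: evaluation of the `e`-th partial computable function at `n`. -/
def kapp (e n : ℕ) : Part ℕ := (Denumerable.ofNat Nat.Partrec.Code e).eval n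

/-- Realizability conjunction. -/
def rAnd (p q : Set ℕ) : Set ℕ := {x | ∃ a ∈ p, ∃ b ∈ q, x = Nat.pair a b}

/-- Realizability disjunction. -/
def rOr (p q : Set ℕ) : Set ℕ :=
  {x | (∃ a ∈ p, x = Nat.pair 0 a) ∨ ∃ b ∈ q, x = Nat.pair 1 b}

/-- Realizability implication. -/
def rImp (p q : Set ℕ) : Set ℕ := {e | ∀ n ∈ p, ∃ m ∈ kapp e n, m ∈ q}

/-- The set `⟦is-lop[j]⟧` of realizers witnessing that `j` is a local operator. -/
def isLop (j : Set ℕ → Set ℕ) : Set ℕ :=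
  rAnd (⋂ p : Set ℕ, rImp p (j p))
    (rAnd (⋂ p : Set ℕ, rImp (j (j p)) (j p))
      (⋂ p : Set ℕ, ⋂ q : Set ℕ, rImp (rImp p q) (rImp (j p) (j q))))

/-- The set `⟦j ≤ k⟧` of realizers of the pointwise order between operators. -/
def rLe (j k : Set ℕ → Set ℕ) : Set ℕ := ⋂ p : Set ℕ, rImp (j p) (k p)

/-- The set `(j ≡ k)` of realizers of the equivalence of two operators. -/
def rEquiv (j k : Set ℕ → Set ℕ) : Set ℕ := rAnd (rLe j k) (rLe k j)

/-- The standard lop-frame `P_S` associated with a set `S` of local operators. -/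
def PS (S : Set (Set ℕ → Set ℕ)) (k : Set ℕ → Set ℕ) : Set ℕ :=
  ⋃ l ∈ S, rAnd (isLop l) (rEquiv l k)

/-- The principal upper set `↑j` of an operator `j`. -/
def upSet (j : Set ℕ → Set ℕ) : Set (Set ℕ → Set ℕ) := {k | (rLe j k).Nonempty}

/-- A predicate `Φ` on operators is `≡`-relational. -/
def Relational (Φ : (Set ℕ → Set ℕ) → Set ℕ) : Prop :=
  (⋂ j : Set ℕ → Set ℕ, ⋂ k : Set ℕ → Set ℕ,
    rImp (rAnd (Φ j) (rEquiv j k)) (Φ k)).Nonempty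

/-- The graph predicate `D_f` of a partial function `f`. -/
def Df (f : ℕ →. ℕ) (n : ℕ) : Set ℕ := {x | ∃ m ∈ f n, x = Nat.pair n m}

/-- The monotone map `m_f`. -/
def mf (f : ℕ →. ℕ) (p : Set ℕ) : Set ℕ := ⋃ n : ℕ, rImp (Df f n) p

/-- The local operator `j_f` induced by a partial function `f`. -/
def jf (f : ℕ →. ℕ) (p : Set ℕ) : Set ℕ :=
  ⋂ q : Set ℕ, rImp (rAnd (rImp p q) (rImp (mf f q) q)) q

theorem kapp_partrec : Partrec₂ kapp :=
  Nat.Partrec.Code.eval_part.comp₂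
    ((Computable.ofNat Nat.Partrec.Code).comp Computable.fst) Computable.snd

theorem kapp_smn {α : Type} [Primcodable α] (g : α → ℕ →. ℕ) (hg : Partrec₂ g) :
    ∃ s : α → ℕ, Computable s ∧ ∀ a n, kapp (s a) n = g a n := by
  have h1 : Partrec (fun x : ℕ =>
      ((Encodable.decode (α := α) x.unpair.1 : Option α) : Part α).bind
        fun a => g a x.unpair.2) := by
    refine Partrec.bind (Computable.ofOption
      (Computable.decode.comp (Computable.fst.comp Computable.unpair))) ?_
    exact hg.comp Computable.snd
      (Computable.snd.comp (Computable.unpair.comp Computable.fst))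
  obtain ⟨c, hc⟩ := Nat.Partrec.Code.exists_code.1 (Partrec.nat_iff.1 h1)
  obtain ⟨f, hf, hfc⟩ := Nat.Partrec.Code.smn
  refine ⟨fun a => Encodable.encode (f c (Encodable.encode a)),
    Computable.encode.comp (hf.comp (Computable.const c) Computable.encode), ?_⟩
  intro a n
  simp only [kapp, Denumerable.ofNat_encode]
  rw [hfc, hc]
  simp

theorem kapp_code (g : ℕ →. ℕ) (hg : Partrec g) : ∃ e, ∀ n, kapp e n = g n := by
  obtain ⟨s, -, hs⟩ := kapp_smn (fun (_ : Unit) n => g n) (hg.comp Computable.snd)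
  exact ⟨s (), hs ()⟩

theorem kapp_code_total (g : ℕ → ℕ) (hg : Computable g) :
    ∃ e, ∀ n, kapp e n = Part.some (g n) := kapp_code _ hg

theorem kapp_smn_total {α : Type} [Primcodable α] (g : α → ℕ → ℕ) (hg : Computable₂ g) :
    ∃ s : α → ℕ, Computable s ∧ ∀ a n, kapp (s a) n = Part.some (g a n) :=
  kapp_smn (fun a n => Part.some (g a n)) hg

theorem mem_rImp_of {e : ℕ} {p q : Set ℕ} (g : ℕ → ℕ) (h : ∀ n, kapp e n = Part.some (g n))
    (hg : ∀ n ∈ p, g n ∈ q) : e ∈ rImp p q := by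
  intro n hn
  exact ⟨g n, by rw [h]; exact Part.mem_some _, hg n hn⟩

theorem exists_comp : ∃ c : ℕ × ℕ → ℕ, Computable c ∧
    ∀ p q r a b, a ∈ rImp q r → b ∈ rImp p q → c (a, b) ∈ rImp p r := by
  obtain ⟨c, hc, h⟩ := kapp_smn (fun (z : ℕ × ℕ) n => (kapp z.2 n).bind (kapp z.1)) (by
    refine Partrec.bind (kapp_partrec.comp (Computable.snd.comp Computable.fst)
      Computable.snd) ?_
    exact kapp_partrec.comp (Computable.fst.comp (Computable.fst.comp Computable.fst))
      Computable.snd)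
  refine ⟨c, hc, ?_⟩
  intro p q r a b ha hb n hn
  obtain ⟨m, hm, hmq⟩ := hb n hn
  obtain ⟨k, hk, hkr⟩ := ha m hmq
  exact ⟨k, by rw [h]; exact Part.mem_bind hm hk, hkr⟩

theorem mf_mono_uniform : ∃ e : ℕ, ∀ (f : ℕ →. ℕ) (p q : Set ℕ),
    e ∈ rImp (rImp p q) (rImp (mf f p) (mf f q)) := by
  obtain ⟨c, hc, h⟩ := exists_comp
  obtain ⟨s, hs, hs'⟩ := kapp_smn_total (fun a b : ℕ => c (a, b)) hc
  obtain ⟨e, he⟩ := kapp_code_total s hs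
  refine ⟨e, fun f p q => mem_rImp_of _ he fun a ha => mem_rImp_of _ (hs' a) fun b hb => ?_⟩
  obtain ⟨n, hn⟩ := Set.mem_iUnion.1 hb
  exact Set.mem_iUnion.2 ⟨n, h _ _ _ a b ha hn⟩

theorem jf_unit : ∃ e : ℕ, ∀ (f : ℕ →. ℕ) (p : Set ℕ), e ∈ rImp p (jf f p) := by
  obtain ⟨s, hs, hs'⟩ := kapp_smn (fun n x : ℕ => kapp x.unpair.1 n)
    (kapp_partrec.comp (Computable.fst.comp (Computable.unpair.comp Computable.snd))
      Computable.fst)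
  obtain ⟨e, he⟩ := kapp_code_total s hs
  refine ⟨e, fun f p => mem_rImp_of _ he fun n hn => Set.mem_iInter.2 fun q => ?_⟩
  rintro _ ⟨a, ha, b, -, rfl⟩
  rw [hs', Nat.unpair_pair]
  exact ha n hn

theorem jf_mult : ∃ e : ℕ, ∀ (f : ℕ →. ℕ) (p : Set ℕ),
    e ∈ rImp (jf f (jf f p)) (jf f p) := by
  obtain ⟨c, hc, hc'⟩ := kapp_smn (fun x y : ℕ => kapp y x)
    (kapp_partrec.comp Computable.snd Computable.fst)
  obtain ⟨s, hs, hs'⟩ := kapp_smn (fun x y : ℕ => kapp x (Nat.pair (c y) y.unpair.2))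
    (kapp_partrec.comp Computable.fst
      (Primrec₂.natPair.to_comp.comp (hc.comp Computable.snd)
        (Computable.snd.comp (Computable.unpair.comp Computable.snd))))
  obtain ⟨e, he⟩ := kapp_code_total s hs
  refine ⟨e, fun f p => mem_rImp_of _ he fun x hx => Set.mem_iInter.2 fun q => ?_⟩
  rintro _ ⟨a, ha, b, hb, rfl⟩
  rw [hs', Nat.unpair_pair]
  refine Set.mem_iInter.1 hx q _ ⟨_, ?_, b, hb, rfl⟩
  intro y hy
  rw [hc']
  exact Set.mem_iInter.1 hy q _ ⟨a, ha, b, hb, rfl⟩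

theorem jf_mono : ∃ e : ℕ, ∀ (f : ℕ →. ℕ) (p q : Set ℕ),
    e ∈ rImp (rImp p q) (rImp (jf f p) (jf f q)) := by
  obtain ⟨c, hc, h⟩ := exists_comp
  obtain ⟨t, ht, ht'⟩ := kapp_smn (fun (z : ℕ × ℕ) (y : ℕ) =>
      kapp z.2 (Nat.pair (c (y.unpair.1, z.1)) y.unpair.2))
    (kapp_partrec.comp (Computable.snd.comp Computable.fst)
      (Primrec₂.natPair.to_comp.comp
        (hc.comp ((Computable.fst.comp (Computable.unpair.comp Computable.snd)).pair
          (Computable.fst.comp Computable.fst)))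
        (Computable.snd.comp (Computable.unpair.comp Computable.snd))))
  obtain ⟨s, hs, hs'⟩ := kapp_smn_total (fun a b : ℕ => t (a, b)) ht
  obtain ⟨e, he⟩ := kapp_code_total s hs
  refine ⟨e, fun f p q => mem_rImp_of _ he fun a ha => mem_rImp_of _ (hs' a) fun x hx =>
    Set.mem_iInter.2 fun r => ?_⟩
  rintro _ ⟨u, hu, v, hv, rfl⟩
  rw [ht', Nat.unpair_pair]
  exact Set.mem_iInter.1 hx r _ ⟨_, h _ _ _ u a hu ha, v, hv, rfl⟩

/-- Observation 5.13: the monotonicity of `m_f` and the fact that `j_f` is a local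
operator in the effective topos are realized uniformly in `f`. -/
theorem jf_uniform :
    (∃ e : ℕ, ∀ (f : ℕ →. ℕ) (p q : Set ℕ),
        e ∈ rImp (rImp p q) (rImp (mf f p) (mf f q))) ∧
    (∃ e : ℕ, ∀ f : ℕ →. ℕ, e ∈ isLop (jf f)) := by
  obtain ⟨e₁, h₁⟩ := jf_unit
  obtain ⟨e₂, h₂⟩ := jf_mult
  obtain ⟨e₃, h₃⟩ := jf_mono
  refine ⟨mf_mono_uniform, Nat.pair e₁ (Nat.pair e₂ e₃), fun f => ?_⟩
  exact ⟨e₁, Set.mem_iInter.2 (h₁ f), _, ⟨e₂, Set.mem_iInter.2 (h₂ f), e₃,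
    Set.mem_iInter.2 fun p => Set.mem_iInter.2 (h₃ f p), rfl⟩, rfl⟩
end

section
/- (Lemma 5.8(1): standard lop-frames and external quantification.) Let S be a set of local operators in the effective topos, let j be a local operator, and let Φ : (Set ℕ → Set ℕ) → Set ℕ be an ≡-relational predicate. Then the two sets ⋂_{k} ((P_S(k) ∧ ⟦j ≤ k⟧) → Φ(k)) (intersection over all k : Set ℕ → Set ℕ) and ⋂_{ℓ∈S} ((⟦is-lop[ℓ]⟧ ∧ ⟦j ≤ ℓ⟧) → Φ(ℓ)) are equivalent: each of the two realizability implications between them is nonempty. -/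
theorem kapp_smn_s16 (f : ℕ → ℕ → Part ℕ) (hf : Partrec₂ f) :
    ∃ g : ℕ → ℕ, Computable g ∧ ∀ x y, kapp (g x) y = f x y := by
  have h2 : Partrec (fun n : ℕ => f n.unpair.1 n.unpair.2) :=
    hf.comp (Computable.fst.comp Computable.unpair) (Computable.snd.comp Computable.unpair)
  obtain ⟨c, hc⟩ := Nat.Partrec.Code.exists_code.1 (Partrec.nat_iff.1 h2)
  refine ⟨fun x => Encodable.encode (c.curry x), ?_, fun x y => ?_⟩
  · exact Computable.encode.comp
      (Nat.Partrec.Code.primrec₂_curry.comp (Primrec.const c) Primrec.id).to_comp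
  · simp [kapp, Nat.Partrec.Code.eval_curry, hc]

theorem kapp_exists (f : ℕ → Part ℕ) (hf : Partrec f) : ∃ e, ∀ x, kapp e x = f x := by
  obtain ⟨c, hc⟩ := Nat.Partrec.Code.exists_code.1 (Partrec.nat_iff.1 hf)
  exact ⟨Encodable.encode c, fun x => by simp [kapp, hc]⟩

theorem kapp_smn_code (f : ℕ → ℕ → Part ℕ) (hf : Partrec₂ f) :
    ∃ e, ∀ x, ∃ m ∈ kapp e x, ∀ y, kapp m y = f x y := by
  obtain ⟨g, hg, hgf⟩ := kapp_smn_s16 f hf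
  obtain ⟨e, he⟩ := kapp_exists _ hg.partrec
  exact ⟨e, fun x => ⟨g x, by simp [he], hgf x⟩⟩

/-- Lemma 5.8(1): for a standard lop-frame, internal universal quantification over
`P_S` is equivalent to external universal quantification over `S`. -/
theorem stdLopFrame_iInter (S : Set (Set ℕ → Set ℕ)) (hS : ∀ l ∈ S, (isLop l).Nonempty)
    (j : Set ℕ → Set ℕ) (hj : (isLop j).Nonempty)
    (Φ : (Set ℕ → Set ℕ) → Set ℕ) (hΦ : Relational Φ) :
    (rImp (⋂ k : Set ℕ → Set ℕ, rImp (rAnd (PS S k) (rLe j k)) (Φ k))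
        (⋂ l ∈ S, rImp (rAnd (isLop l) (rLe j l)) (Φ l))).Nonempty ∧
    (rImp (⋂ l ∈ S, rImp (rAnd (isLop l) (rLe j l)) (Φ l))
        (⋂ k : Set ℕ → Set ℕ, rImp (rAnd (PS S k) (rLe j k)) (Φ k))).Nonempty := by
  have cf : Computable (fun n : ℕ => n.unpair.1) := Computable.fst.comp Computable.unpair
  have cs : Computable (fun n : ℕ => n.unpair.2) := Computable.snd.comp Computable.unpair
  have cp : Computable₂ Nat.pair := Primrec₂.natPair.to_comp
  constructor
  · obtain ⟨i, hi⟩ := kapp_exists (fun x => Part.some x) Computable.id.partrec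
    have hid : ∀ l, i ∈ rLe l l := by
      intro l
      simp only [rLe, Set.mem_iInter]
      intro p n hn
      exact ⟨n, by simp [hi], hn⟩
    obtain ⟨e, he⟩ := kapp_smn_code
      (fun x y => kapp x (Nat.pair (Nat.pair y.unpair.1 (Nat.pair i i)) y.unpair.2))
      (kapp_partrec.comp Computable.fst
        (cp.comp (cp.comp (cf.comp Computable.snd) (Computable.const _))
          (cs.comp Computable.snd)))
    refine ⟨e, fun x hx => ?_⟩
    obtain ⟨m, hm, hmy⟩ := he x
    refine ⟨m, hm, ?_⟩
    simp only [Set.mem_iInter] at hx ⊢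
    rintro l hl _ ⟨a, ha, b, hb, rfl⟩
    rw [hmy]
    simp only [Nat.unpair_pair]
    refine hx l _ ⟨_, ?_, b, hb, rfl⟩
    simp only [PS, Set.mem_iUnion]
    exact ⟨l, hl, a, ha, _, ⟨i, hid l, i, hid l, rfl⟩, rfl⟩
  · obtain ⟨t, ht⟩ := hΦ
    simp only [Set.mem_iInter] at ht
    -- composition of realizers: `g ⟨b, v⟩` codes `v ∘ b`
    obtain ⟨g, hg, hgf⟩ := kapp_smn_s16
      (fun x y => (kapp x.unpair.1 y).bind (fun z => kapp x.unpair.2 z))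
      (Partrec.bind (kapp_partrec.comp (cf.comp Computable.fst) Computable.snd)
        (kapp_partrec.comp (cs.comp (Computable.fst.comp Computable.fst)) Computable.snd))
    obtain ⟨e, he⟩ := kapp_smn_code
      (fun x y => (kapp x (Nat.pair y.unpair.1.unpair.1
          (g (Nat.pair y.unpair.2 y.unpair.1.unpair.2.unpair.2)))).bind
        (fun r => kapp t (Nat.pair r y.unpair.1.unpair.2)))
      (Partrec.bind
        (kapp_partrec.comp Computable.fst
          (cp.comp (cf.comp (cf.comp Computable.snd))
            (hg.comp (cp.comp (cs.comp Computable.snd)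
              (cs.comp (cs.comp (cf.comp Computable.snd)))))))
        (kapp_partrec.comp (Computable.const t)
          (cp.comp Computable.snd
            (cs.comp (cf.comp (Computable.snd.comp Computable.fst))))))
    refine ⟨e, fun x hx => ?_⟩
    obtain ⟨m, hm, hmy⟩ := he x
    refine ⟨m, hm, ?_⟩
    simp only [Set.mem_iInter] at hx ⊢
    rintro k _ ⟨w, hw, b, hb, rfl⟩
    simp only [PS, Set.mem_iUnion] at hw
    obtain ⟨l, hl, a, ha, _, ⟨u, hu, v, hv, rfl⟩, rfl⟩ := hw
    rw [hmy]
    simp only [Nat.unpair_pair]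
    have hc : g (Nat.pair b v) ∈ rLe j l := by
      simp only [rLe, Set.mem_iInter] at hb hv ⊢
      intro p n hn
      obtain ⟨z, hz, hzk⟩ := hb p n hn
      obtain ⟨y, hy, hyl⟩ := hv p z hzk
      refine ⟨y, ?_, hyl⟩
      rw [hgf]
      simp only [Nat.unpair_pair]
      exact Part.mem_bind hz hy
    obtain ⟨r, hr, hrl⟩ := hx l hl _ ⟨a, ha, _, hc, rfl⟩
    obtain ⟨s, hs, hsk⟩ := ht l k _ ⟨r, hrl, _, ⟨u, hu, v, hv, rfl⟩, rfl⟩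
    exact ⟨s, Part.mem_bind hr hs, hsk⟩
end

section
/- (Limitation of j-realizability for double negations, Proposition 6.?.) For every local operator j in the effective topos and every arithmetic sentence φ: if j(⟦¬¬φ⟧_j) is nonempty, then j(⟦φ⟧_j) is nonempty. (Here ¬φ abbreviates φ → ⊥ where ⊥ is the false atomic sentence 0 = S 0; nonemptiness of j(⟦ψ⟧_j) expresses validity of the j-translation of ψ in the effective topos.) -/
/-- Codes for primitive recursive function symbols (with arities). -/
inductive PRF : ℕ → Type where
  | zero : PRF 0
  | succ : PRF 1
  | proj : {n : ℕ} → Fin n → PRF n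
  | comp : {m n : ℕ} → PRF m → (Fin m → PRF n) → PRF n
  | prec : {n : ℕ} → PRF n → PRF (n + 2) → PRF (n + 1)

/-- Standard evaluation of a primitive recursive function symbol. -/
def PRF.eval : {n : ℕ} → PRF n → (Fin n → ℕ) → ℕ
  | _, .zero, _ => 0
  | _, .succ, v => v 0 + 1
  | _, .proj i, v => v i
  | _, .comp g h, v => g.eval fun i => (h i).eval v
  | _, .prec g h, v =>
      Nat.rec (g.eval fun i => v i.succ)
        (fun y ih => h.eval (Fin.cons y (Fin.cons ih fun i => v i.succ)))
        (v 0)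

/-- Terms of the language of arithmetic: variables (de Bruijn indices) and
applications of primitive recursive function symbols. -/
inductive ATerm : Type where
  | var : ℕ → ATerm
  | func : {n : ℕ} → PRF n → (Fin n → ATerm) → ATerm

/-- The constant `0`. -/
def ATerm.zero : ATerm := .func PRF.zero fun i => i.elim0

/-- The successor `S t`. -/
def ATerm.S (t : ATerm) : ATerm := .func PRF.succ fun _ => t

/-- Standard evaluation of a term under a parameter assignment. -/
def ATerm.eval (ρ : ℕ → ℕ) : ATerm → ℕ
  | .var n => ρ n
  | .func f ts => f.eval fun i => (ts i).eval ρ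

def ATerm.rename (σ : ℕ → ℕ) : ATerm → ATerm
  | .var n => .var (σ n)
  | .func f ts => .func f fun i => (ts i).rename σ

def ATerm.subst (σ : ℕ → ATerm) : ATerm → ATerm
  | .var n => σ n
  | .func f ts => .func f fun i => (ts i).subst σ

/-- Lift a substitution under a binder. -/
def liftSub (σ : ℕ → ATerm) : ℕ → ATerm
  | 0 => .var 0
  | n + 1 => (σ n).rename Nat.succ

/-- Formulas of arithmetic (atomic formulas are equations between terms;
de Bruijn indexing of variables). -/
inductive AFml : Type where
  | eq : ATerm → ATerm → AFml
  | and : AFml → AFml → AFml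
  | or : AFml → AFml → AFml
  | imp : AFml → AFml → AFml
  | ex : AFml → AFml
  | all : AFml → AFml

def AFml.subst : AFml → (ℕ → ATerm) → AFml
  | .eq t s, σ => .eq (t.subst σ) (s.subst σ)
  | .and φ ψ, σ => .and (φ.subst σ) (ψ.subst σ)
  | .or φ ψ, σ => .or (φ.subst σ) (ψ.subst σ)
  | .imp φ ψ, σ => .imp (φ.subst σ) (ψ.subst σ)
  | .ex φ, σ => .ex (φ.subst (liftSub σ))
  | .all φ, σ => .all (φ.subst (liftSub σ))

/-- `⊥` is the false atomic sentence `0 = S 0`. -/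
def AFml.bot : AFml := .eq ATerm.zero (ATerm.S ATerm.zero)

/-- `¬φ := φ → ⊥`. -/
def AFml.neg (φ : AFml) : AFml := φ.imp AFml.bot

/-- The substitution instantiating the bound variable `0` by the term `t`. -/
def sub0 (t : ATerm) : ℕ → ATerm
  | 0 => t
  | n + 1 => .var n

/-- The substitution replacing the variable `0` by `S (var 0)`. -/
def subS : ℕ → ATerm
  | 0 => ATerm.S (.var 0)
  | n + 1 => .var (n + 1)

/-- The shift substitution (weakening). -/
def shiftSub : ℕ → ATerm := fun n => .var (n + 1)

/-- The non-logical axioms of Heyting arithmetic: the successor axiom, the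
defining equations of all primitive recursive function symbols, and the
induction scheme. -/
inductive HAax : AFml → Prop where
  | succ_ne_zero : HAax (.all (AFml.eq (ATerm.S (.var 0)) ATerm.zero).neg)
  | proj_eq {n : ℕ} (i : Fin n) :
      HAax (.eq (.func (PRF.proj i) fun k => .var k.1) (.var i.1))
  | comp_eq {m n : ℕ} (g : PRF m) (h : Fin m → PRF n) :
      HAax (.eq (.func (PRF.comp g h) fun k => .var k.1)
        (.func g fun i => .func (h i) fun k => .var k.1))
  | prec_zero {n : ℕ} (g : PRF n) (h : PRF (n + 2)) :
      HAax (.eq (.func (PRF.prec g h) (Fin.cons ATerm.zero fun k : Fin n => .var k.1))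
        (.func g fun k => .var k.1))
  | prec_succ {n : ℕ} (g : PRF n) (h : PRF (n + 2)) :
      HAax (.eq (.func (PRF.prec g h) (Fin.cons (ATerm.S (.var n)) fun k : Fin n => .var k.1))
        (.func h (Fin.cons (.var n) (Fin.cons
          (.func (PRF.prec g h) (Fin.cons (.var n) fun k : Fin n => .var k.1))
          fun k : Fin n => .var k.1))))
  | ind (φ : AFml) :
      HAax (((φ.subst (sub0 ATerm.zero)).and (.all (φ.imp (φ.subst subS)))).imp (.all φ))

/-- Hilbert-style intuitionistic derivability from a theory `T`
(Gödel's system for `IQC`, deeply embedded). -/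
inductive Deriv (T : AFml → Prop) : AFml → Prop where
  -- non-logical axioms
  | ax {φ : AFml} : T φ → Deriv T φ
  -- logical axioms
  | botE (φ : AFml) : Deriv T (AFml.bot.imp φ)
  | andE (φ ψ : AFml) : Deriv T ((φ.and ψ).imp φ)
  | orI (φ ψ : AFml) : Deriv T (φ.imp (φ.or ψ))
  | orContr (φ : AFml) : Deriv T ((φ.or φ).imp φ)
  | andContr (φ : AFml) : Deriv T (φ.imp (φ.and φ))
  | orComm (φ ψ : AFml) : Deriv T ((φ.or ψ).imp (ψ.or φ))
  | andComm (φ ψ : AFml) : Deriv T ((φ.and ψ).imp (ψ.and φ))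
  | allE (φ : AFml) (t : ATerm) : Deriv T ((AFml.all φ).imp (φ.subst (sub0 t)))
  | exI (φ : AFml) (t : ATerm) : Deriv T ((φ.subst (sub0 t)).imp (AFml.ex φ))
  -- rules
  | mp {φ ψ : AFml} : Deriv T φ → Deriv T (φ.imp ψ) → Deriv T ψ
  | syl {φ ψ χ : AFml} : Deriv T (φ.imp ψ) → Deriv T (ψ.imp χ) → Deriv T (φ.imp χ)
  | exp {φ ψ χ : AFml} : Deriv T ((φ.and ψ).imp χ) → Deriv T (φ.imp (ψ.imp χ))
  | imp' {φ ψ χ : AFml} : Deriv T (φ.imp (ψ.imp χ)) → Deriv T ((φ.and ψ).imp χ)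
  | orMono {φ ψ χ : AFml} : Deriv T (φ.imp ψ) → Deriv T ((φ.or χ).imp (ψ.or χ))
  | allI {φ ψ : AFml} : Deriv T ((ψ.subst shiftSub).imp φ) → Deriv T (ψ.imp (AFml.all φ))
  | exE {φ ψ : AFml} : Deriv T (φ.imp (ψ.subst shiftSub)) → Deriv T ((AFml.ex φ).imp ψ)

/-- Extend a parameter assignment in `ℕ` by one value. -/
def Env.cons (y : ℕ) (ρ : ℕ → ℕ) : ℕ → ℕ := fun n =>
  match n with
  | 0 => y
  | n + 1 => ρ n

/-- The `j`-realizability set `⟦φ⟧_j` of an arithmetic formula under a parameter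
assignment. -/
def jreal (j : Set ℕ → Set ℕ) : AFml → (ℕ → ℕ) → Set ℕ
  | .eq t s, ρ => if t.eval ρ = s.eval ρ then Set.univ else ∅
  | .and φ ψ, ρ => rAnd (jreal j φ ρ) (jreal j ψ ρ)
  | .or φ ψ, ρ => rOr (jreal j φ ρ) (jreal j ψ ρ)
  | .imp φ ψ, ρ => rImp (jreal j φ ρ) (j (jreal j ψ ρ))
  | .ex φ, ρ => ⋃ m : ℕ, rAnd {m} (jreal j φ (Env.cons m ρ))
  | .all φ, ρ => ⋂ m : ℕ, rImp {m} (j (jreal j φ (Env.cons m ρ)))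

/-- Proposition 6.14 (limitation of `j`-realizability for double negations):
if the `j`-translation of `¬¬φ` is valid in the effective topos, then so is that
of `φ`. -/
theorem jreal_dneg_elim (j : Set ℕ → Set ℕ) (hj : (isLop j).Nonempty)
    (φ : AFml) (ρ : ℕ → ℕ) (h : (j (jreal j φ.neg.neg ρ)).Nonempty) :
    (j (jreal j φ ρ)).Nonempty := by
  obtain ⟨_, a, ha, _, ⟨b, _, c, hc, _⟩, _⟩ := hj
  simp only [Set.mem_iInter] at ha hc
  -- a realizer of `p` yields one of `j p`
  have hunit : ∀ p : Set ℕ, p.Nonempty → (j p).Nonempty := by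
    rintro p ⟨n, hn⟩
    obtain ⟨m, _, hm⟩ := ha p n hn
    exact ⟨m, hm⟩
  have hmono : (j ∅).Nonempty → ∀ q : Set ℕ, (j q).Nonempty := by
    rintro ⟨n, hn⟩ q
    obtain ⟨e, _, he⟩ := hc ∅ q 0 (fun x hx => absurd hx (Set.notMem_empty x))
    obtain ⟨m, _, hm⟩ := he n hn
    exact ⟨m, hm⟩
  by_cases h0 : (j ∅).Nonempty
  · exact hmono h0 _
  have hbot : jreal j AFml.bot ρ = ∅ := by
    simp [AFml.bot, jreal, ATerm.eval, ATerm.zero, ATerm.S, PRF.eval]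
  have hj0 : j ∅ = ∅ := Set.not_nonempty_iff_eq_empty.mp h0
  apply hunit
  by_contra hφ
  have hφ0 := Set.not_nonempty_iff_eq_empty.mp hφ
  have hnn : jreal j φ.neg.neg ρ = ∅ := by
    ext e
    simp only [AFml.neg, jreal, hbot, hj0, hφ0, Set.mem_empty_iff_false, iff_false]
    intro he
    obtain ⟨m, _, hm⟩ := he 0 (fun x hx => absurd hx (Set.notMem_empty x))
    exact hm
  rw [hnn] at h
  exact h0 h
end
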